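/- Let θ ∈ (0, π), let n ≥ 1, and let λ₁, …, λ_n be real numbers; set θᵢ := arccot(λᵢ) = π/2 − arctan(λᵢ) ∈ (0, π). Then ∑_{i=1}^n θᵢ = θ if and only if both: (i) Re(∏_{i=1}^n (λᵢ + i)) − cot(θ)·Im(∏_{i=1}^n (λᵢ + i)) = 0, and (ii) for every proper subset K ⊊ {1,…,n}, Re(∏_{i∈K} (λᵢ + i)) − cot(θ)·Im(∏_{i∈K} (λᵢ + i)) > 0 (the empty product being 1). -/

import Mathlib

open Real

/-- The arccotangent with range `(0, π)`. -/
noncomputable def arccot (x : ℝ) : ℝ := π / 2 - Real.arctan x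

/-!
The angle `arccot x` is the argument of `x + i`, and for `z` of argument `φ` one has
`Re z - cot θ * Im z = ‖z‖ * sin (θ - φ) / sin θ`. Both conditions are therefore about the sign of
`sin (θ - ∑_{i ∈ K} θᵢ)`. That sign determines on which side of `θ` the sum lies only as long as the
sum stays below `θ + π`. Building up `K` one index at a time guarantees this: a proper subset has
sum `< θ`, and adding one more angle increases it by at most `π`.
-/

theorem arccot_pos (x : ℝ) : 0 < arccot x :=
  sub_pos.2 (arctan_lt_pi_div_two x)

theorem arg_ofReal_add_I (x : ℝ) : Complex.arg (x + Complex.I) = arccot x := by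
  have norm_eq : ‖(x : ℂ) + Complex.I‖ = √(1 + x ^ 2) := by
    simpa [add_comm] using Complex.norm_add_mul_I x 1
  rw [Complex.arg_of_im_pos (by simp), norm_eq, arccot, arctan_eq_arcsin, arccos]
  simp only [Complex.add_re, Complex.ofReal_re, Complex.I_re, add_zero]

section AngleSums

variable {ι : Type*} {s : Finset ι} {θ : ℝ}

theorem sum_lt_of_forall_subset_sin_pos {φ : ι → ℝ} (hθ : 0 < θ) (hφ : ∀ i ∈ s, φ i ≤ π)
    (hsin : ∀ K ⊆ s, 0 < sin (θ - ∑ i ∈ K, φ i)) : ∑ i ∈ s, φ i < θ := by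
  induction s using Finset.cons_induction with
  | empty => simpa using hθ
  | cons a s ha ih =>
    have sum_s_lt : ∑ i ∈ s, φ i < θ :=
      ih (fun i hi ↦ hφ i (Finset.mem_cons_of_mem hi))
        fun K hK ↦ hsin K (hK.trans (Finset.subset_cons ha))
    have neg_pi_le : -π ≤ θ - ∑ i ∈ s.cons a ha, φ i := by
      rw [Finset.sum_cons]
      linarith [hφ a (Finset.mem_cons_self a s)]
    contrapose! hsin
    exact ⟨s.cons a ha, subset_rfl, sin_nonpos_of_nonpos_of_neg_pi_le (by linarith) neg_pi_le⟩

theorem sum_lt_add_pi_of_forall_ssubset_sin_pos {φ : ι → ℝ} (hθ : 0 < θ) (hφ : ∀ i ∈ s, φ i ≤ π)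
    (hsin : ∀ K ⊂ s, 0 < sin (θ - ∑ i ∈ K, φ i)) : ∑ i ∈ s, φ i < θ + π := by
  classical
  obtain rfl | ⟨a, ha⟩ := s.eq_empty_or_nonempty
  · simpa using add_pos hθ pi_pos
  have sum_erase_lt : ∑ i ∈ s.erase a, φ i < θ :=
    sum_lt_of_forall_subset_sin_pos hθ (fun i hi ↦ hφ i (Finset.mem_of_mem_erase hi))
      fun K hK ↦ hsin K (hK.trans_ssubset (Finset.erase_ssubset ha))
  rw [← Finset.sum_erase_add s φ ha]
  exact add_lt_add_of_lt_of_le sum_erase_lt (hφ a ha)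

theorem sum_eq_iff_sin_eq_zero_and_forall_ssubset_sin_pos {φ : ι → ℝ} (hθ : θ ∈ Set.Ioo 0 π)
    (hφ : ∀ i ∈ s, φ i ∈ Set.Ioc 0 π) :
    ∑ i ∈ s, φ i = θ ↔
      sin (θ - ∑ i ∈ s, φ i) = 0 ∧ ∀ K ⊂ s, 0 < sin (θ - ∑ i ∈ K, φ i) := by
  have sum_nonneg {K : Finset ι} (hK : K ⊆ s) : 0 ≤ ∑ i ∈ K, φ i :=
    Finset.sum_nonneg fun i hi ↦ (hφ i (hK hi)).1.le
  constructor
  · intro sum_eq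
    refine ⟨by rw [sum_eq, sub_self, sin_zero], fun K hK ↦ ?_⟩
    obtain ⟨a, ha, haK⟩ := Finset.exists_of_ssubset hK
    have sum_K_lt : ∑ i ∈ K, φ i < θ := sum_eq ▸
      Finset.sum_lt_sum_of_subset hK.subset ha haK (hφ a ha).1 fun i hi _ ↦ (hφ i hi).1.le
    exact sin_pos_of_pos_of_lt_pi (by linarith) (by linarith [sum_nonneg hK.subset, hθ.2])
  · rintro ⟨sin_eq_zero, sin_pos⟩
    have sum_lt : ∑ i ∈ s, φ i < θ + π :=
      sum_lt_add_pi_of_forall_ssubset_sin_pos hθ.1 (fun i hi ↦ (hφ i hi).2) sin_pos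
    have sub_eq_zero : θ - ∑ i ∈ s, φ i = 0 :=
      (sin_eq_zero_iff_of_lt_of_lt (by linarith)
        (by linarith [sum_nonneg subset_rfl, hθ.2])).1 sin_eq_zero
    linarith

end AngleSums

section ComplexProducts

variable {ι : Type*} {θ : ℝ}

theorem prod_eq_prod_norm_mul_exp_sum_arg (s : Finset ι) (z : ι → ℂ) :
    ∏ i ∈ s, z i =
      ((∏ i ∈ s, ‖z i‖ : ℝ) : ℂ) * Complex.exp ((∑ i ∈ s, (z i).arg : ℝ) * Complex.I) := by
  push_cast
  rw [Finset.sum_mul, Complex.exp_sum, ← Finset.prod_mul_distrib]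
  exact Finset.prod_congr rfl fun i _ ↦ (Complex.norm_mul_exp_arg_mul_I (z i)).symm

theorem re_sub_cot_mul_im_prod (hθ : sin θ ≠ 0) (s : Finset ι) (z : ι → ℂ) :
    (∏ i ∈ s, z i).re - cos θ / sin θ * (∏ i ∈ s, z i).im =
      (∏ i ∈ s, ‖z i‖) / sin θ * sin (θ - ∑ i ∈ s, (z i).arg) := by
  rw [prod_eq_prod_norm_mul_exp_sum_arg, Complex.re_ofReal_mul, Complex.im_ofReal_mul,
    Complex.exp_ofReal_mul_I_re, Complex.exp_ofReal_mul_I_im, sin_sub]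
  field_simp

theorem angle_eq_iff_dhym_general (hθ : θ ∈ Set.Ioo 0 π) {s : Finset ι} {z : ι → ℂ}
    (hz : ∀ i ∈ s, 0 < (z i).arg) :
    ∑ i ∈ s, (z i).arg = θ ↔
      (∏ i ∈ s, z i).re - cos θ / sin θ * (∏ i ∈ s, z i).im = 0 ∧
        ∀ K ⊂ s, 0 < (∏ i ∈ K, z i).re - cos θ / sin θ * (∏ i ∈ K, z i).im := by
  have sin_pos : 0 < sin θ := sin_pos_of_mem_Ioo hθ
  have factor_pos {K : Finset ι} (hK : K ⊆ s) : 0 < (∏ i ∈ K, ‖z i‖) / sin θ :=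
    div_pos (Finset.prod_pos fun i hi ↦ norm_pos_iff.2 fun hzero ↦
      (hz i (hK hi)).ne' (by rw [hzero, Complex.arg_zero])) sin_pos
  simp only [re_sub_cot_mul_im_prod sin_pos.ne']
  rw [sum_eq_iff_sin_eq_zero_and_forall_ssubset_sin_pos hθ
    fun i hi ↦ ⟨hz i hi, Complex.arg_le_pi (z i)⟩]
  exact and_congr (mul_eq_zero_iff_left (factor_pos subset_rfl).ne').symm
    (forall₂_congr fun K hK ↦ (mul_pos_iff_of_pos_left (factor_pos hK.subset)).symm)

end ComplexProducts

/-- For `θ ∈ (0, π)` and reals `λ₁, …, λ_n` (`n ≥ 1`) with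
`θᵢ := arccot λᵢ ∈ (0, π)`, one has `∑ θᵢ = θ` iff both
(i) `Re (∏ (λᵢ + i)) − cot θ · Im (∏ (λᵢ + i)) = 0`, and
(ii) for every proper subset `K ⊊ {1,…,n}`,
`Re (∏_{i ∈ K} (λᵢ + i)) − cot θ · Im (∏_{i ∈ K} (λᵢ + i)) > 0`
(the empty product being `1`). -/
theorem angle_eq_iff_dhym (θ : ℝ) (hθ : θ ∈ Set.Ioo 0 π) (n : ℕ) (hn : 1 ≤ n)
    (lam : Fin n → ℝ) :
    (∑ i, arccot (lam i)) = θ ↔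
      ((∏ i, ((lam i : ℂ) + Complex.I)).re
          - (Real.cos θ / Real.sin θ) * (∏ i, ((lam i : ℂ) + Complex.I)).im = 0 ∧
        ∀ K : Finset (Fin n), K ≠ Finset.univ →
          0 < (∏ i ∈ K, ((lam i : ℂ) + Complex.I)).re
                - (Real.cos θ / Real.sin θ) * (∏ i ∈ K, ((lam i : ℂ) + Complex.I)).im) := by
  simpa only [arg_ofReal_add_I, Finset.ssubset_univ_iff] using
    angle_eq_iff_dhym_general hθ (s := Finset.univ) (z := fun i ↦ (lam i : ℂ) + Complex.I)
      fun i _ ↦ (arccot_pos (lam i)).trans_eq (arg_ofReal_add_I (lam i)).symm
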